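/- Let N ≥ 1 be an integer, τ ∈ ℂ with Im τ > 0, and ξ, ζ ∈ ℂ generic (so that no denominator below vanishes). For integers a, b let S^{ab}(ξ,ζ,τ) = ( ϑ[(b−a)/N + 1/2, 1/2](ξ+ζ, Nτ) / ϑ[−a/N + 1/2, 1/2](ζ, Nτ) ) · ( ∏_{k=0, k≠b mod N}^{N−1} ϑ[k/N + 1/2, 1/2](ξ, Nτ) ) / ( ∏_{k=1}^{N−1} ϑ[k/N + 1/2, 1/2](0, Nτ) ), indices read modulo N. Then for all i, j ∈ {0,…,N−1} the following crossing identity holds: ∑_{k=0}^{N−1} S^{i−k, 0}(ξ, ζ, τ) · S^{j−k, 0}(−ξ−Nζ, ζ, τ) = ( ϑ[1/2,1/2](ξ, τ) · ϑ[1/2,1/2](−ξ−Nζ, τ) / ϑ[1/2,1/2](ζ, τ)² ) · δ_{ij}, where δ_{ij} is the Kronecker delta. -/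

import Mathlib

open Complex

/-- The Jacobi theta function with characteristics `(g1, g2)`:
`ϑ[g1,g2](ξ,τ) = ∑_{m∈ℤ} exp(iπ(m+g1)²τ + 2iπ(m+g1)(ξ+g2))`. -/
noncomputable def thetaChar (g1 g2 : ℝ) (xi tau : ℂ) : ℂ :=
  ∑' m : ℤ, Complex.exp ((Real.pi : ℂ) * I * ((m : ℂ) + (g1 : ℂ)) ^ 2 * tau
      + 2 * (Real.pi : ℂ) * I * ((m : ℂ) + (g1 : ℂ)) * (xi + (g2 : ℂ)))

/-- The nonvanishing entries `S^{ab}(ξ,ζ,τ)` of the ℤ_N-symmetric elliptic R-matrix,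
with indices `a, b` read modulo `N`:
`S^{ab} = (ϑ[(b−a)/N+1/2,1/2](ξ+ζ,Nτ)/ϑ[−a/N+1/2,1/2](ζ,Nτ))
  (∏_{k=0,k≠b mod N}^{N−1} ϑ[k/N+1/2,1/2](ξ,Nτ)) / (∏_{k=1}^{N−1} ϑ[k/N+1/2,1/2](0,Nτ))`. -/
noncomputable def Smat (N : ℕ) (xi zeta tau : ℂ) (a b : ℤ) : ℂ :=
  thetaChar (((b : ℝ) - (a : ℝ)) / N + 1 / 2) (1 / 2) (xi + zeta) ((N : ℂ) * tau)
    / thetaChar (-(a : ℝ) / N + 1 / 2) (1 / 2) zeta ((N : ℂ) * tau)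
    * (∏ k ∈ (Finset.range N).filter (fun k : ℕ => (k : ℤ) % (N : ℤ) ≠ b % (N : ℤ)),
        thetaChar ((k : ℝ) / N + 1 / 2) (1 / 2) xi ((N : ℂ) * tau))
    / ∏ k ∈ Finset.Icc 1 (N - 1),
        thetaChar ((k : ℝ) / N + 1 / 2) (1 / 2) 0 ((N : ℂ) * tau)

/-
The matrix `(S^{i-k,0})_{i,k}` is circulant, so the crossing identity says that the discrete
Fourier transforms of its symbols at `ξ` and at `-ξ - Nζ` have a constant product at opposite
frequencies. Up to a factor independent of `ζ`, the transform of the symbol at frequency `n` is a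
quotient by `∏_a ϑ[a/N+1/2,1/2](ζ,Nτ)` of an entire function of `ζ` with the same multipliers for
the lattice `ℤ + ℤτ` as `ϑ[1/2,1/2](ζ + (ξ-n)/N, τ)`. Such functions are unique up to scalars, so
comparing values at `ζ = 0`, where a single term survives, gives the transform as
`ϑ(ξ) ϑ(ζ + (ξ-n)/N) / (ϑ(ζ) ϑ((ξ-n)/N))` with `ϑ = ϑ[1/2,1/2](·,τ)`. Under `ξ ↦ -ξ - Nζ`,
`n ↦ -n` the arguments `(ξ-n)/N` and `ζ + (ξ-n)/N` are exchanged up to sign, and everything but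
`ϑ(ξ) ϑ(-ξ-Nζ) / ϑ(ζ)²` cancels; the identity theorem in `ξ` covers the zeros of the cancelled
factors.
-/

open scoped Real

/-! ### Entire functions -/

section Entire

theorem eq_zero_of_fourierCoeff_eq_zero {T : ℝ} [Fact (0 < T)] {f : C(AddCircle T, ℂ)}
    (hf : fourierCoeff f = 0) : f = 0 := by
  have hsum := hasSum_fourier_series_of_summable (f := f) (hf ▸ summable_zero)
  simp only [hf, Pi.zero_apply, zero_smul] at hsum
  exact hsum.unique hasSum_zero

theorem integral_comp_add_eq_of_periodic {E : Type*} [NormedAddCommGroup E] [NormedSpace ℂ E]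
    {g : ℂ → E} {T : ℝ} (hg : Differentiable ℂ g) (hper : Function.Periodic g T) (w : ℂ) :
    ∫ t in (0 : ℝ)..T, g (t + w) = ∫ t in (0 : ℝ)..T, g t := by
  have hvert : ∫ t in (0 : ℝ)..T, g (t + w.im * I) = ∫ t in (0 : ℝ)..T, g t := by
    have hrect := integral_boundary_rect_eq_zero_of_differentiableOn g 0 (T + w.im * I)
      hg.differentiableOn
    have hside (y : ℝ) : g (T + y * I) = g (y * I) := by rw [add_comm, hper]
    simp only [zero_re, zero_im, add_re, add_im, mul_re, mul_im, I_re, I_im, ofReal_re, ofReal_im,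
      ofReal_zero, mul_zero, mul_one, zero_mul, add_zero, zero_add, sub_self, hside,
      add_sub_cancel_right] at hrect
    exact (sub_eq_zero.mp hrect).symm
  have hhor : Function.Periodic (fun t : ℝ ↦ g (t + w.im * I)) T := fun t ↦ by
    simp only [ofReal_add]
    rw [add_right_comm, hper]
  calc ∫ t in (0 : ℝ)..T, g (t + w)
      = ∫ t in (0 : ℝ)..T, g ((t + w.re : ℝ) + w.im * I) := by
        simp only [ofReal_add, add_assoc, re_add_im]
    _ = ∫ t in w.re..w.re + T, g (t + w.im * I) := by
        rw [intervalIntegral.integral_comp_add_right (fun t : ℝ ↦ g (t + w.im * I)), zero_add,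
          add_comm]
    _ = ∫ t in (0 : ℝ)..T, g t := by rw [hhor.intervalIntegral_add_eq w.re 0, zero_add, hvert]

theorem eq_zero_of_integral_mul_exp_eq_zero {g : ℂ → ℂ} (hg : Differentiable ℂ g)
    (hper : Function.Periodic g 1)
    (hint : ∀ n : ℤ, ∫ t in (0 : ℝ)..1, g t * cexp (-(2 * π * I * n * t)) = 0) : g = 0 := by
  funext w
  have : Fact ((0 : ℝ) < 1) := ⟨one_pos⟩
  have hline : Function.Periodic (fun t : ℝ ↦ g (t + w)) 1 := fun t ↦ by
    simp only [ofReal_add, ofReal_one, add_right_comm, hper _]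
  have hcont : Continuous (hline.lift : AddCircle (1 : ℝ) → ℂ) :=
    continuous_coinduced_dom.mpr (hg.continuous.comp (by fun_prop : Continuous fun t : ℝ ↦ t + w))
  have hcoeff : fourierCoeff (⟨hline.lift, hcont⟩ : C(AddCircle (1 : ℝ), ℂ)) = 0 := by
    funext n
    have hmode : Function.Periodic (fun z ↦ g z * cexp (-(2 * π * I * n * z))) (1 : ℝ) := by
      intro z
      simp only [ofReal_one]
      rw [hper, mul_add, neg_add, Complex.exp_add, mul_one,
        show -(2 * π * I * n) = (-n : ℤ) * (2 * π * I) by push_cast; ring, exp_int_mul_two_pi_mul_I,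
        mul_one]
    have hshift := integral_comp_add_eq_of_periodic (by fun_prop) hmode w
    rw [hint] at hshift
    rw [fourierCoeff_eq_intervalIntegral _ n 0, zero_add, Pi.zero_apply]
    refine smul_eq_zero_of_right _ ?_
    rw [← mul_zero (cexp (2 * π * I * n * w)), ← hshift, ← intervalIntegral.integral_const_mul]
    refine intervalIntegral.integral_congr fun t _ ↦ ?_
    simp only [ContinuousMap.coe_mk, Function.Periodic.lift_coe, fourier_coe_apply, smul_eq_mul]
    rw [mul_left_comm, ← Complex.exp_add, mul_comm]
    congr 2
    push_cast
    ring
  have hzero := DFunLike.congr_fun (eq_zero_of_fourierCoeff_eq_zero hcoeff) ((0 : ℝ) : AddCircle _)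
  simpa only [ContinuousMap.coe_mk, hline.lift_coe, ofReal_zero, zero_add, ContinuousMap.zero_apply,
    Pi.zero_apply] using hzero

theorem eq_of_mul_eq_mul_of_differentiable {f g h : ℂ → ℂ} (hf : Differentiable ℂ f)
    (hg : Differentiable ℂ g) (hh : Differentiable ℂ h) {w : ℂ} (hw : h w ≠ 0)
    (heq : ∀ z, f z * h z = g z * h z) : f = g := by
  have hdisj := AnalyticOnNhd.eq_zero_or_eq_zero_of_mul_eq_zero (U := Set.univ)
    (fun z _ ↦ (hf.sub hg).analyticAt z) (fun z _ ↦ hh.analyticAt z)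
    (fun z _ ↦ by rw [Pi.sub_apply, sub_mul, heq, sub_self]) isPreconnected_univ
  funext z
  exact sub_eq_zero.mp (hdisj.resolve_right (fun h0 ↦ hw (h0 w trivial)) z trivial)

end Entire

/-! ### Theta functions of degree one -/

/-- Theta functions of degree one for the lattice `ℤ + ℤτ` with prescribed multipliers: entire
functions multiplied by a constant under `z ↦ z + 1` and by a constant times `e^{-2πiz}` under
`z ↦ z + τ`. The multipliers are recorded by logarithms `α`, `β`, so that they are nonzero and
`ϑ[g,h](·,τ)` has `α = g`, `β = τ/2 + h`. -/
structure IsDegreeOneTheta (τ α β : ℂ) (F : ℂ → ℂ) : Prop where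
  differentiable : Differentiable ℂ F
  add_one : ∀ z, F (z + 1) = cexp (2 * π * I * α) * F z
  add_tau : ∀ z, F (z + τ) = cexp (-(2 * π * I * (z + β))) * F z

/-- The Fourier coefficients of the `1`-periodic function `z ↦ F z e^{-2πiαz}` attached to a
function with `F (z + 1) = e^{2πiα} F z`. -/
noncomputable def twistedFourierCoeff (α : ℂ) (F : ℂ → ℂ) (n : ℤ) : ℂ :=
  ∫ t in (0 : ℝ)..1, F t * cexp (-(2 * π * I * (n + α) * t))

namespace IsDegreeOneTheta

variable {τ α β : ℂ} {F G : ℂ → ℂ}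

theorem const_mul (hF : IsDegreeOneTheta τ α β F) (c : ℂ) :
    IsDegreeOneTheta τ α β fun z ↦ c * F z where
  differentiable := hF.differentiable.const_mul c
  add_one z := by rw [hF.add_one, mul_left_comm]
  add_tau z := by rw [hF.add_tau, mul_left_comm]

theorem sub (hF : IsDegreeOneTheta τ α β F) (hG : IsDegreeOneTheta τ α β G) :
    IsDegreeOneTheta τ α β fun z ↦ F z - G z where
  differentiable := hF.differentiable.sub hG.differentiable
  add_one z := by rw [hF.add_one, hG.add_one, mul_sub]
  add_tau z := by rw [hF.add_tau, hG.add_tau, mul_sub]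

theorem comp_add_right (hF : IsDegreeOneTheta τ α β F) (u : ℂ) :
    IsDegreeOneTheta τ α (β + u) fun z ↦ F (z + u) where
  differentiable := hF.differentiable.comp (differentiable_id.add_const u)
  add_one z := by rw [add_right_comm, hF.add_one]
  add_tau z := by rw [add_right_comm, hF.add_tau, add_assoc, add_comm u]

theorem periodic_mul_exp (hF : IsDegreeOneTheta τ α β F) (n : ℤ) :
    Function.Periodic (fun z ↦ F z * cexp (-(2 * π * I * (n + α) * z))) (1 : ℝ) := fun z ↦ by
  simp only [ofReal_one]
  rw [hF.add_one, mul_right_comm, ← Complex.exp_add, mul_comm]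
  congr 1
  rw [Complex.exp_eq_exp_iff_exists_int]
  exact ⟨-n, by push_cast; ring⟩

theorem twistedFourierCoeff_eq (hF : IsDegreeOneTheta τ α β F) (n : ℤ) :
    twistedFourierCoeff α F n
      = cexp (-(2 * π * I * (β + (n + α) * τ))) * twistedFourierCoeff α F (n + 1) := by
  have hdiff := hF.differentiable
  rw [twistedFourierCoeff, twistedFourierCoeff,
    ← integral_comp_add_eq_of_periodic (by fun_prop) (hF.periodic_mul_exp n) τ,
    ← intervalIntegral.integral_const_mul]
  refine intervalIntegral.integral_congr fun t _ ↦ ?_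
  simp only [hF.add_tau]
  rw [mul_right_comm, ← Complex.exp_add, mul_left_comm, ← Complex.exp_add, mul_comm]
  congr 2
  push_cast
  ring

theorem eq_zero_of_twistedFourierCoeff_zero (hF : IsDegreeOneTheta τ α β F)
    (h0 : twistedFourierCoeff α F 0 = 0) : F = 0 := by
  have hcoeff (n : ℤ) : twistedFourierCoeff α F n = 0 := by
    induction n using Int.induction_on with
    | zero => exact h0
    | succ k ih =>
      rw [hF.twistedFourierCoeff_eq] at ih
      exact (mul_eq_zero.mp ih).resolve_left (Complex.exp_ne_zero _)
    | pred k ih => rw [hF.twistedFourierCoeff_eq, sub_add_cancel, ih, mul_zero]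
  have hdiff := hF.differentiable
  have hzero := eq_zero_of_integral_mul_exp_eq_zero
    (g := fun z ↦ F z * cexp (-(2 * π * I * ((0 : ℤ) + α) * z))) (by fun_prop)
    (by simpa only [ofReal_one] using hF.periodic_mul_exp 0) fun n ↦ by
      rw [← hcoeff n, twistedFourierCoeff]
      refine intervalIntegral.integral_congr fun t _ ↦ ?_
      rw [mul_assoc, ← Complex.exp_add]
      congr 2
      push_cast
      ring
  funext z
  exact (mul_eq_zero.mp (congrFun hzero z)).resolve_right (Complex.exp_ne_zero _)

theorem mul_eq_mul (hF : IsDegreeOneTheta τ α β F) (hG : IsDegreeOneTheta τ α β G) (x y : ℂ) :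
    F x * G y = F y * G x := by
  set cF := twistedFourierCoeff α F 0
  set cG := twistedFourierCoeff α G 0
  by_cases h : cF = 0
  · simp [hF.eq_zero_of_twistedFourierCoeff_zero h]
  have hcomb : (fun z ↦ cG * F z - cF * G z) = 0 := by
    refine ((hF.const_mul cG).sub (hG.const_mul cF)).eq_zero_of_twistedFourierCoeff_zero ?_
    have hFd := hF.differentiable.continuous
    have hGd := hG.differentiable.continuous
    simp only [twistedFourierCoeff, sub_mul, mul_assoc cG, mul_assoc cF]
    rw [intervalIntegral.integral_sub, intervalIntegral.integral_const_mul,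
      intervalIntegral.integral_const_mul]
    · exact sub_eq_zero.mpr (mul_comm cG cF)
    all_goals exact Continuous.intervalIntegrable (by fun_prop) _ _
  have hx : cG * F x - cF * G x = 0 := congrFun hcomb x
  have hy : cG * F y - cF * G y = 0 := congrFun hcomb y
  refine mul_left_cancel₀ h ?_
  linear_combination F y * hx - F x * hy

end IsDegreeOneTheta

/-! ### Theta functions with characteristics -/

section ThetaChar

theorem thetaChar_eq_exp_mul_jacobiTheta₂ (g h : ℝ) (x t : ℂ) :
    thetaChar g h x t = cexp (π * I * g ^ 2 * t + 2 * π * I * g * (x + h))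
      * jacobiTheta₂ (x + h + g * t) t := by
  rw [thetaChar, jacobiTheta₂, ← tsum_mul_left]
  refine tsum_congr fun m ↦ ?_
  rw [jacobiTheta₂_term, ← Complex.exp_add]
  congr 1
  ring

theorem differentiable_thetaChar (g h : ℝ) {t : ℂ} (ht : 0 < t.im) :
    Differentiable ℂ fun x ↦ thetaChar g h x t := by
  have hjac : Differentiable ℂ fun x : ℂ ↦ jacobiTheta₂ (x + h + g * t) t :=
    Differentiable.comp (fun z ↦ differentiableAt_jacobiTheta₂_fst z ht)
      (by fun_prop : Differentiable ℂ fun x : ℂ ↦ x + h + g * t)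
  simp_rw [thetaChar_eq_exp_mul_jacobiTheta₂]
  fun_prop

theorem thetaChar_add_intCast (g h : ℝ) (n : ℤ) (x t : ℂ) :
    thetaChar (g + n) h x t = thetaChar g h x t := by
  unfold thetaChar
  refine .trans (tsum_congr fun m ↦ ?_) ((Equiv.addRight n).tsum_eq _)
  rw [Equiv.coe_addRight]
  congr 1
  push_cast
  ring

theorem thetaChar_add_char (g c h : ℝ) (x t : ℂ) :
    thetaChar (g + c) h x t
      = cexp (π * I * c ^ 2 * t + 2 * π * I * c * (x + h)) * thetaChar g h (x + c * t) t := by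
  unfold thetaChar
  rw [← tsum_mul_left]
  refine tsum_congr fun m ↦ ?_
  rw [← Complex.exp_add]
  congr 1
  push_cast
  ring

theorem thetaChar_add_one (g h : ℝ) (x t : ℂ) :
    thetaChar g h (x + 1) t = cexp (2 * π * I * g) * thetaChar g h x t := by
  unfold thetaChar
  rw [← tsum_mul_left]
  refine tsum_congr fun m ↦ ?_
  rw [← Complex.exp_add, Complex.exp_eq_exp_iff_exists_int]
  exact ⟨m, by ring⟩

theorem thetaChar_add_tau (g h : ℝ) (x t : ℂ) :
    thetaChar g h (x + t) t = cexp (-(2 * π * I * (x + (t / 2 + h)))) * thetaChar g h x t := by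
  have hshift := thetaChar_add_char g (1 : ℤ) h x t
  rw [thetaChar_add_intCast] at hshift
  simp only [Int.cast_one, ofReal_one, one_mul] at hshift
  have hexp : -(2 * π * I * (x + (t / 2 + h)))
      + (π * I * 1 ^ 2 * t + 2 * π * I * 1 * (x + h)) = 0 := by
    ring
  rw [hshift, ← mul_assoc, ← Complex.exp_add, hexp, Complex.exp_zero, one_mul]

theorem isDegreeOneTheta_thetaChar (g h : ℝ) {t : ℂ} (ht : 0 < t.im) :
    IsDegreeOneTheta t g (t / 2 + h) fun x ↦ thetaChar g h x t where
  differentiable := differentiable_thetaChar g h ht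
  add_one x := thetaChar_add_one g h x t
  add_tau x := thetaChar_add_tau g h x t

theorem isDegreeOneTheta_thetaChar_half_half {t : ℂ} (ht : 0 < t.im) :
    IsDegreeOneTheta t (1 / 2) (t / 2 + 1 / 2) fun x ↦ thetaChar (1 / 2) (1 / 2) x t := by
  have htheta := isDegreeOneTheta_thetaChar (1 / 2) (1 / 2) ht
  push_cast at htheta
  exact htheta

theorem thetaChar_half_half_neg (x t : ℂ) :
    thetaChar (1 / 2) (1 / 2) (-x) t = -thetaChar (1 / 2) (1 / 2) x t := by
  unfold thetaChar
  rw [← (Equiv.subLeft (-1 : ℤ)).tsum_eq, ← tsum_neg]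
  refine tsum_congr fun m ↦ ?_
  rw [Equiv.subLeft_apply, ← Complex.exp_add_pi_mul_I, Complex.exp_eq_exp_iff_exists_int]
  refine ⟨-m - 1, ?_⟩
  push_cast
  ring

theorem thetaChar_half_half_zero (t : ℂ) : thetaChar (1 / 2) (1 / 2) 0 t = 0 := by
  have hneg := thetaChar_half_half_neg 0 t
  rw [neg_zero] at hneg
  exact self_eq_neg.mp hneg

end ThetaChar

/-! ### Sums and Fourier transforms on `ZMod N` -/

section ZModFourier

variable {N : ℕ} [NeZero N]

@[to_additive]
theorem prod_range_natCast_zmod {M : Type*} [CommMonoid M] (f : ZMod N → M) :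
    ∏ k ∈ Finset.range N, f k = ∏ k, f k :=
  Finset.prod_nbij' (fun k ↦ (k : ZMod N)) ZMod.val (fun _ _ ↦ Finset.mem_univ _)
    (fun k _ ↦ Finset.mem_range.mpr k.val_lt)
    (fun _ hk ↦ ZMod.val_cast_of_lt (Finset.mem_range.mp hk))
    (fun k _ ↦ ZMod.natCast_zmod_val k) (fun _ _ ↦ rfl)

theorem prod_filter_natCast_zmod_ne_zero {M : Type*} [CommMonoid M] (f : ZMod N → M) :
    ∏ k ∈ Finset.range N with ((k : ℕ) : ZMod N) ≠ 0, f k = ∏ b ∈ Finset.univ.erase 0, f b := by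
  rw [Finset.prod_filter, prod_range_natCast_zmod fun b ↦ if b ≠ 0 then f b else 1,
    ← Finset.prod_filter, Finset.filter_ne']

theorem dft_comp_add_right {E : Type*} [AddCommGroup E] [Module ℂ E] (Φ : ZMod N → E)
    (c k : ZMod N) :
    ZMod.dft (fun a ↦ Φ (a + c)) k = ZMod.stdAddChar (c * k) • ZMod.dft Φ k := by
  rw [ZMod.dft_apply, ZMod.dft_apply, Finset.smul_sum]
  refine Fintype.sum_equiv (Equiv.addRight c) _ _ fun a ↦ ?_
  rw [Equiv.coe_addRight, smul_smul, ← AddChar.map_add_eq_mul]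
  congr 2
  ring

theorem dft_sum_mul_comp_add (Φ Ψ : ZMod N → ℂ) (r : ZMod N) :
    ZMod.dft (fun m ↦ ∑ k, Φ k * Ψ (k + m)) r = ZMod.dft Φ (-r) * ZMod.dft Ψ r := by
  calc ZMod.dft (fun m ↦ ∑ k, Φ k * Ψ (k + m)) r
      = ∑ k, Φ k * ZMod.dft (fun m ↦ Ψ (m + k)) r := by
        simp only [ZMod.dft_apply, smul_eq_mul, Finset.mul_sum]
        rw [Finset.sum_comm]
        simp only [mul_left_comm, add_comm]
    _ = ZMod.dft Φ (-r) * ZMod.dft Ψ r := by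
        rw [ZMod.dft_apply Φ, Finset.sum_mul]
        refine Finset.sum_congr rfl fun k _ ↦ ?_
        rw [dft_comp_add_right, smul_eq_mul, smul_eq_mul, mul_neg, neg_neg]
        ring

theorem sum_mul_comp_add_eq_ite {Φ Ψ : ZMod N → ℂ} {c : ℂ}
    (h : ∀ r, ZMod.dft Φ (-r) * ZMod.dft Ψ r = c) (m : ZMod N) :
    ∑ k, Φ k * Ψ (k + m) = if m = 0 then c else 0 := by
  refine congrFun (ZMod.dft.injective (a₁ := fun m ↦ ∑ k, Φ k * Ψ (k + m))
    (a₂ := fun m ↦ if m = 0 then c else 0) ?_) m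
  funext r
  rw [dft_sum_mul_comp_add, h, ZMod.dft_apply]
  simp

end ZModFourier

/-! ### Theta functions of modulus `Nτ` indexed by `ZMod N` -/

/-- `ϑ[a/N + 1/2, 1/2](x, Nτ)`, which depends on `a` only modulo `N`. -/
noncomputable def thetaZMod (N : ℕ) (τ : ℂ) (a : ZMod N) (x : ℂ) : ℂ :=
  thetaChar ((a.val : ℝ) / N + 1 / 2) (1 / 2) x (N * τ)

/-- The product of all `ϑ[b/N + 1/2, 1/2](·, Nτ)`, the argument of the factor of index `b` being
translated by `v b`. -/
noncomputable def thetaProd (N : ℕ) [NeZero N] (τ : ℂ) (v : ZMod N → ℂ) (x : ℂ) : ℂ :=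
  ∏ b, thetaZMod N τ b (x + v b)

section ThetaZMod

variable {N : ℕ}

theorem thetaZMod_zero_zero (τ : ℂ) : thetaZMod N τ 0 0 = 0 := by
  simpa [thetaZMod] using thetaChar_half_half_zero (N * τ)

theorem thetaZMod_add_one (τ : ℂ) (a : ZMod N) (x : ℂ) :
    thetaZMod N τ a (x + 1) = cexp (2 * π * I * (a.val / N + 1 / 2)) * thetaZMod N τ a x := by
  rw [thetaZMod, thetaChar_add_one, thetaZMod]
  push_cast
  rfl

variable [NeZero N] {τ : ℂ}

theorem thetaZMod_intCast (τ : ℂ) (n : ℤ) (x : ℂ) :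
    thetaZMod N τ n x = thetaChar ((n : ℝ) / N + 1 / 2) (1 / 2) x (N * τ) := by
  have hN : (N : ℝ) ≠ 0 := NeZero.ne _
  have hval : (((n : ZMod N).val : ℤ) : ℝ) + N * ((n / N : ℤ) : ℝ) = n := by
    rw [ZMod.val_intCast]
    exact_mod_cast Int.emod_add_mul_ediv n N
  rw [thetaZMod, ← thetaChar_add_intCast _ _ (n / N), ← hval]
  congr 1
  push_cast
  field_simp
  ring

theorem thetaZMod_natCast (τ : ℂ) (n : ℕ) (x : ℂ) :
    thetaZMod N τ n x = thetaChar ((n : ℝ) / N + 1 / 2) (1 / 2) x (N * τ) := by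
  simpa only [Int.cast_natCast] using thetaZMod_intCast (N := N) τ n x

theorem differentiable_thetaZMod (hτ : 0 < τ.im) (a : ZMod N) :
    Differentiable ℂ (thetaZMod N τ a) :=
  differentiable_thetaChar _ _ <| by
    rw [← nsmul_eq_mul, Complex.smul_im]
    exact nsmul_pos hτ (NeZero.ne N)

theorem thetaZMod_add_tau (τ : ℂ) (a : ZMod N) (x : ℂ) :
    thetaZMod N τ a (x + τ)
      = cexp (-(2 * π * I * (x + (τ / 2 + 1 / 2)) / N)) * thetaZMod N τ (a + 1) x := by
  have hN : (N : ℂ) ≠ 0 := NeZero.ne _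
  have hsucc : thetaZMod N τ (a + 1) x
      = thetaChar ((a.val : ℝ) / N + 1 / 2 + (1 / N : ℝ)) (1 / 2) x (N * τ) := by
    rw [← ZMod.natCast_zmod_val a, ← Nat.cast_succ, thetaZMod_natCast, ZMod.natCast_zmod_val]
    congr 1
    push_cast
    ring
  have hperiod : ((1 / N : ℝ) : ℂ) * (N * τ) = τ := by
    push_cast
    field_simp
  rw [hsucc, thetaChar_add_char, hperiod, ← mul_assoc, ← Complex.exp_add, thetaZMod]
  have hexp : -(2 * π * I * (x + (τ / 2 + 1 / 2)) / N)
      + (π * I * (1 / N : ℝ) ^ 2 * (N * τ) + 2 * π * I * (1 / N : ℝ) * (x + (1 / 2 : ℝ))) = 0 := by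
    push_cast
    field_simp
    ring
  rw [hexp, Complex.exp_zero, one_mul]

theorem prod_exp_val_div_add_half :
    ∏ a : ZMod N, cexp (2 * π * I * (a.val / N + 1 / 2)) = cexp (2 * π * I * (1 / 2)) := by
  have hN : (N : ℂ) ≠ 0 := NeZero.ne _
  have hgauss : (∑ a : ZMod N, (a.val : ℂ)) * 2 = N * (N - 1) := by
    rw [← sum_range_natCast_zmod (fun a : ZMod N ↦ (a.val : ℂ)),
      Finset.sum_congr rfl fun k hk ↦ by rw [ZMod.val_cast_of_lt (Finset.mem_range.mp hk)],
      ← Nat.cast_pred (NeZero.pos N)]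
    rw [← Nat.cast_sum]
    exact_mod_cast Finset.sum_range_id_mul_two N
  rw [← Complex.exp_sum, ← Finset.mul_sum, Finset.sum_add_distrib, ← Finset.sum_div,
    Finset.sum_const, Finset.card_univ, ZMod.card, nsmul_eq_mul,
    Complex.exp_eq_exp_iff_exists_int]
  refine ⟨N - 1, ?_⟩
  push_cast
  field_simp
  linear_combination hgauss

theorem thetaProd_add_one (τ : ℂ) (v : ZMod N → ℂ) (x : ℂ) :
    thetaProd N τ v (x + 1) = cexp (2 * π * I * (1 / 2)) * thetaProd N τ v x := by
  simp only [thetaProd, add_right_comm x 1, thetaZMod_add_one, Finset.prod_mul_distrib,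
    prod_exp_val_div_add_half]

theorem thetaProd_add_tau (τ : ℂ) (v : ZMod N → ℂ) (x : ℂ) :
    thetaProd N τ v (x + τ) = cexp (-(2 * π * I * (x + (τ / 2 + 1 / 2 + (∑ b, v b) / N))))
      * thetaProd N τ (fun b ↦ v (b - 1)) x := by
  have hN : (N : ℂ) ≠ 0 := NeZero.ne _
  simp only [thetaProd, add_right_comm x τ, thetaZMod_add_tau, Finset.prod_mul_distrib]
  congr 1
  · rw [← Complex.exp_sum, Finset.sum_neg_distrib, ← Finset.sum_div, ← Finset.mul_sum,
      Finset.sum_add_distrib, Finset.sum_add_distrib, Finset.sum_const, Finset.sum_const,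
      Finset.card_univ, ZMod.card, nsmul_eq_mul, nsmul_eq_mul]
    congr 1
    field_simp
    ring
  · exact Fintype.prod_equiv (Equiv.addRight 1) _ _ fun b ↦ by simp

theorem differentiable_thetaProd (hτ : 0 < τ.im) (v : ZMod N → ℂ) :
    Differentiable ℂ (thetaProd N τ v) := by
  have (b : ZMod N) := differentiable_thetaZMod hτ b
  unfold thetaProd
  fun_prop

theorem isDegreeOneTheta_thetaProd_zero (hτ : 0 < τ.im) :
    IsDegreeOneTheta τ (1 / 2) (τ / 2 + 1 / 2) (thetaProd N τ 0) where
  differentiable := differentiable_thetaProd hτ 0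
  add_one := thetaProd_add_one τ 0
  add_tau x := by simpa [Pi.zero_def] using thetaProd_add_tau (N := N) τ 0 x

theorem thetaProd_single (τ : ℂ) (a : ZMod N) (ξ x : ℂ) :
    thetaProd N τ (Pi.single a ξ) x
      = thetaZMod N τ a (x + ξ) * ∏ b ∈ Finset.univ.erase a, thetaZMod N τ b x := by
  rw [thetaProd, ← Finset.mul_prod_erase _ _ (Finset.mem_univ a), Pi.single_eq_same]
  congr 1
  refine Finset.prod_congr rfl fun b hb ↦ ?_
  rw [Pi.single_eq_of_ne (Finset.ne_of_mem_erase hb), add_zero]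

theorem thetaProd_zero (τ : ℂ) (a : ZMod N) (x : ℂ) :
    thetaProd N τ 0 x
      = thetaZMod N τ a x * ∏ b ∈ Finset.univ.erase a, thetaZMod N τ b x := by
  simpa using thetaProd_single τ a 0 x

theorem thetaProd_zero_mul_thetaChar (hτ : 0 < τ.im) (x y : ℂ) :
    thetaProd N τ 0 x * thetaChar (1 / 2) (1 / 2) y τ
      = thetaProd N τ 0 y * thetaChar (1 / 2) (1 / 2) x τ :=
  (isDegreeOneTheta_thetaProd_zero hτ).mul_eq_mul
    (isDegreeOneTheta_thetaChar_half_half hτ) x y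

theorem isDegreeOneTheta_dft_thetaProd_single (hτ : 0 < τ.im) (ξ : ℂ) (n : ℤ) :
    IsDegreeOneTheta τ (1 / 2) (τ / 2 + 1 / 2 + (ξ - n) / N)
      fun x ↦ ZMod.dft (fun a : ZMod N ↦ thetaProd N τ (Pi.single a ξ) x) n where
  differentiable := by
    have (a : ZMod N) := differentiable_thetaProd hτ (Pi.single a ξ)
    simp only [ZMod.dft_apply]
    fun_prop
  add_one x := by simp only [thetaProd_add_one, ZMod.dft_const_mul]
  add_tau x := by
    have hshift (a : ZMod N) :
        (fun b ↦ Pi.single (M := fun _ ↦ ℂ) a ξ (b - 1)) = Pi.single (a + 1) ξ := by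
      funext b
      simp only [Pi.single_apply, sub_eq_iff_eq_add]
    simp only [thetaProd_add_tau, hshift, Finset.sum_pi_single', Finset.mem_univ, if_true,
      ZMod.dft_const_mul]
    rw [dft_comp_add_right (fun a : ZMod N ↦ thetaProd N τ (Pi.single a ξ) x), one_mul,
      ZMod.stdAddChar_coe, smul_eq_mul, ← mul_assoc, ← Complex.exp_add]
    congr 2
    ring

theorem dft_thetaProd_single_zero (τ ξ : ℂ) (k : ZMod N) :
    ZMod.dft (fun a : ZMod N ↦ thetaProd N τ (Pi.single a ξ) 0) k
      = thetaZMod N τ 0 ξ * ∏ b ∈ Finset.univ.erase 0, thetaZMod N τ b 0 := by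
  rw [ZMod.dft_apply, Finset.sum_eq_single_of_mem 0 (Finset.mem_univ _), thetaProd_single]
  · simp
  · intro a _ ha
    rw [thetaProd_single, Finset.prod_eq_zero (Finset.mem_erase.mpr ⟨ha.symm, Finset.mem_univ _⟩)
      (thetaZMod_zero_zero τ), mul_zero, smul_zero]

theorem dft_thetaProd_single_mul_thetaChar (hτ : 0 < τ.im) (ξ ζ : ℂ) (n : ℤ) :
    ZMod.dft (fun a : ZMod N ↦ thetaProd N τ (Pi.single a ξ) ζ) n
        * thetaChar (1 / 2) (1 / 2) ((ξ - n) / N) τ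
      = thetaZMod N τ 0 ξ * (∏ b ∈ Finset.univ.erase 0, thetaZMod N τ b 0)
        * thetaChar (1 / 2) (1 / 2) (ζ + (ξ - n) / N) τ := by
  have hprop := (isDegreeOneTheta_dft_thetaProd_single hτ ξ n).mul_eq_mul
    ((isDegreeOneTheta_thetaChar_half_half hτ).comp_add_right ((ξ - n) / N)) ζ 0
  rwa [zero_add, dft_thetaProd_single_zero] at hprop

end ThetaZMod

/-! ### The circulant matrix of the R-matrix entries -/

/-- The entry `S^{-a,0}(ξ,ζ,τ)` as a function of `a : ZMod N`, i.e. the symbol of the circulant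
matrix `(S^{i-k,0})_{i,k}`, whose `(i,k)` entry is its value at `k - i`. -/
noncomputable def circulantSymbol (N : ℕ) [NeZero N] (ξ ζ τ : ℂ) (a : ZMod N) : ℂ :=
  thetaZMod N τ a (ξ + ζ) / thetaZMod N τ a ζ
    * (∏ b ∈ Finset.univ.erase 0, thetaZMod N τ b ξ)
    / ∏ b ∈ Finset.univ.erase 0, thetaZMod N τ b 0

section Crossing

variable {N : ℕ} [NeZero N] {τ ξ ζ : ℂ}

theorem prod_Icc_thetaChar (τ x : ℂ) :
    ∏ k ∈ Finset.Icc 1 (N - 1), thetaChar ((k : ℝ) / N + 1 / 2) (1 / 2) x (N * τ)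
      = ∏ b ∈ Finset.univ.erase 0, thetaZMod N τ b x := by
  have hIcc : Finset.Icc 1 (N - 1) = {k ∈ Finset.range N | ((k : ℕ) : ZMod N) ≠ 0} := by
    ext k
    rw [Finset.mem_Icc, Finset.mem_filter, Finset.mem_range, Ne, ZMod.natCast_eq_zero_iff]
    have := NeZero.pos N
    refine ⟨fun hk ↦ ⟨by omega, Nat.not_dvd_of_pos_of_lt (by omega) (by omega)⟩, fun hk ↦ ?_⟩
    have : k ≠ 0 := by rintro rfl; exact hk.2 (dvd_zero N)
    omega
  simp only [hIcc, ← thetaZMod_natCast]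
  exact prod_filter_natCast_zmod_ne_zero fun b ↦ thetaZMod N τ b x

theorem Smat_zero_right (ξ ζ τ : ℂ) (a : ℤ) :
    Smat N ξ ζ τ a 0 = circulantSymbol N ξ ζ τ (-a) := by
  have hfilter (k : ℕ) : (k : ℤ) % (N : ℤ) ≠ 0 % (N : ℤ) ↔ (k : ZMod N) ≠ 0 := by
    simpa using (ZMod.intCast_eq_intCast_iff' (k : ℤ) 0 N).not.symm
  have hsub : ((0 : ℤ) : ℝ) - a = (-a : ℤ) := by push_cast; ring
  rw [Smat, prod_Icc_thetaChar]
  simp only [hfilter, hsub, ← Int.cast_neg, ← thetaZMod_intCast, ← thetaZMod_natCast]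
  rw [prod_filter_natCast_zmod_ne_zero fun b ↦ thetaZMod N τ b ξ, circulantSymbol]

theorem differentiable_circulantSymbol (hτ : 0 < τ.im) (ζ : ℂ) (a : ZMod N) :
    Differentiable ℂ fun ξ ↦ circulantSymbol N ξ ζ τ a := by
  have (b : ZMod N) := differentiable_thetaZMod hτ b
  simp only [circulantSymbol, div_eq_mul_inv]
  fun_prop

theorem circulantSymbol_eq_mul_thetaProd_single (hζ : ∀ a, thetaZMod N τ a ζ ≠ 0) (ξ : ℂ)
    (a : ZMod N) :
    circulantSymbol N ξ ζ τ a
      = (∏ b ∈ Finset.univ.erase 0, thetaZMod N τ b ξ)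
          / ((∏ b ∈ Finset.univ.erase 0, thetaZMod N τ b 0) * thetaProd N τ 0 ζ)
        * thetaProd N τ (Pi.single a ξ) ζ := by
  have hprod : ∏ b ∈ Finset.univ.erase a, thetaZMod N τ b ζ ≠ 0 :=
    Finset.prod_ne_zero_iff.mpr fun b _ ↦ hζ b
  have ha := hζ a
  rw [circulantSymbol, thetaProd_single, thetaProd_zero τ a, add_comm ζ ξ]
  field_simp

theorem dft_circulantSymbol_mul (hτ : 0 < τ.im) (hζ : ∀ a, thetaZMod N τ a ζ ≠ 0)
    (hconst : ∏ b ∈ Finset.univ.erase (0 : ZMod N), thetaZMod N τ b 0 ≠ 0) (ξ : ℂ) (n : ℤ) :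
    ZMod.dft (circulantSymbol N ξ ζ τ) n
        * (thetaChar (1 / 2) (1 / 2) ζ τ * thetaChar (1 / 2) (1 / 2) ((ξ - n) / N) τ)
      = thetaChar (1 / 2) (1 / 2) ξ τ * thetaChar (1 / 2) (1 / 2) (ζ + (ξ - n) / N) τ := by
  have hprod : thetaProd N τ 0 ζ ≠ 0 :=
    Finset.prod_ne_zero_iff.mpr fun b _ ↦ by simpa using hζ b
  have hratio := thetaProd_zero_mul_thetaChar (N := N) hτ ξ ζ
  rw [thetaProd_zero τ 0 ξ] at hratio
  have hdft := dft_thetaProd_single_mul_thetaChar (N := N) hτ ξ ζ n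
  rw [funext (circulantSymbol_eq_mul_thetaProd_single hζ ξ), ZMod.dft_const_mul]
  set A := ∏ b ∈ Finset.univ.erase 0, thetaZMod N τ b ξ
  set C := ∏ b ∈ Finset.univ.erase 0, thetaZMod N τ b 0
  field_simp
  linear_combination A * thetaChar (1 / 2) (1 / 2) ζ τ * hdft
    + C * thetaChar (1 / 2) (1 / 2) (ζ + (ξ - n) / N) τ * hratio

theorem dft_circulantSymbol_neg_mul_dft_mul (hτ : 0 < τ.im) (hζ : ∀ a, thetaZMod N τ a ζ ≠ 0)
    (hconst : ∏ b ∈ Finset.univ.erase (0 : ZMod N), thetaZMod N τ b 0 ≠ 0) (ξ : ℂ) (n : ℤ) :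
    ZMod.dft (circulantSymbol N ξ ζ τ) (-n) * ZMod.dft (circulantSymbol N (-ξ - N * ζ) ζ τ) n
        * thetaChar (1 / 2) (1 / 2) ζ τ ^ 2 * thetaChar (1 / 2) (1 / 2) ((ξ + n) / N) τ
        * thetaChar (1 / 2) (1 / 2) (ζ + (ξ + n) / N) τ
      = thetaChar (1 / 2) (1 / 2) ξ τ * thetaChar (1 / 2) (1 / 2) (-ξ - N * ζ) τ
        * thetaChar (1 / 2) (1 / 2) ((ξ + n) / N) τ
        * thetaChar (1 / 2) (1 / 2) (ζ + (ξ + n) / N) τ := by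
  have hN : (N : ℂ) ≠ 0 := NeZero.ne _
  have hξ := dft_circulantSymbol_mul hτ hζ hconst ξ (-n)
  have hη := dft_circulantSymbol_mul hτ hζ hconst (-ξ - N * ζ) n
  have hneg : (-ξ - N * ζ - n) / N = -(ζ + (ξ + n) / N) := by
    field_simp
    ring
  have hadd : ζ + -(ζ + (ξ + n) / N) = -((ξ + n) / N) := by ring
  rw [hneg, hadd, thetaChar_half_half_neg, thetaChar_half_half_neg] at hη
  simp only [Int.cast_neg, sub_neg_eq_add] at hξ
  set D := ZMod.dft (circulantSymbol N (-ξ - N * ζ) ζ τ) n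
  linear_combination D * thetaChar (1 / 2) (1 / 2) ζ τ
      * thetaChar (1 / 2) (1 / 2) (ζ + (ξ + n) / N) τ * hξ
    - thetaChar (1 / 2) (1 / 2) ξ τ * thetaChar (1 / 2) (1 / 2) (ζ + (ξ + n) / N) τ * hη

theorem dft_circulantSymbol_neg_mul_dft (hτ : 0 < τ.im) (hζ : ∀ a, thetaZMod N τ a ζ ≠ 0)
    (hconst : ∏ b ∈ Finset.univ.erase (0 : ZMod N), thetaZMod N τ b 0 ≠ 0)
    (hθ : thetaChar (1 / 2) (1 / 2) ζ τ ≠ 0) (ξ : ℂ) (r : ZMod N) :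
    ZMod.dft (circulantSymbol N ξ ζ τ) (-r)
        * ZMod.dft (circulantSymbol N (-ξ - N * ζ) ζ τ) r
      = thetaChar (1 / 2) (1 / 2) ξ τ * thetaChar (1 / 2) (1 / 2) (-ξ - N * ζ) τ
        / thetaChar (1 / 2) (1 / 2) ζ τ ^ 2 := by
  have hN : (N : ℂ) ≠ 0 := NeZero.ne _
  obtain ⟨n, rfl⟩ := ZMod.intCast_surjective r
  have hθd := differentiable_thetaChar (1 / 2) (1 / 2) hτ
  have hsymbol (k : ZMod N) :
      Differentiable ℂ fun ξ ↦ ZMod.dft (circulantSymbol N ξ ζ τ) k := by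
    have (a : ZMod N) := differentiable_circulantSymbol hτ ζ a
    simp only [ZMod.dft_apply]
    fun_prop
  have hcomp {F : ℂ → ℂ} (hF : Differentiable ℂ F) {u : ℂ → ℂ} (hu : Differentiable ℂ u) :
      Differentiable ℂ fun z ↦ F (u z) := hF.comp hu
  have hleft := ((hsymbol (-n)).mul (hcomp (hsymbol n)
    (by fun_prop : Differentiable ℂ fun z : ℂ ↦ -z - N * ζ))).mul_const
      (thetaChar (1 / 2) (1 / 2) ζ τ ^ 2)
  have hright := hθd.mul (hcomp hθd (by fun_prop : Differentiable ℂ fun z : ℂ ↦ -z - N * ζ))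
  have hu := hcomp hθd (by fun_prop : Differentiable ℂ fun z : ℂ ↦ (z + n) / N)
  have hζu := hcomp hθd (by fun_prop : Differentiable ℂ fun z : ℂ ↦ ζ + (z + n) / N)
  have hcancel := eq_of_mul_eq_mul_of_differentiable (hleft.mul hu) (hright.mul hu) hζu
    (w := -n) (by simpa using hθ) (dft_circulantSymbol_neg_mul_dft_mul hτ hζ hconst · n)
  have heq := eq_of_mul_eq_mul_of_differentiable hleft hright hu (w := N * ζ - n)
    (by simpa [hN] using hθ) (congrFun hcancel)
  exact (eq_div_iff (pow_ne_zero 2 hθ)).mpr (congrFun heq ξ)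

end Crossing

theorem stmt8_general (N : ℕ) [NeZero N] (τ : ℂ) (hτ : 0 < τ.im) (ξ ζ : ℂ)
    (hden1 : ∀ a : ℤ, thetaChar (-(a : ℝ) / N + 1 / 2) (1 / 2) ζ (N * τ) ≠ 0)
    (hden2 : ∏ k ∈ Finset.Icc 1 (N - 1), thetaChar ((k : ℝ) / N + 1 / 2) (1 / 2) 0 (N * τ) ≠ 0)
    (hden3 : thetaChar (1 / 2) (1 / 2) ζ τ ≠ 0) (i j : ℤ) :
    ∑ k ∈ Finset.range N, Smat N ξ ζ τ (i - k) 0 * Smat N (-ξ - N * ζ) ζ τ (j - k) 0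
      = thetaChar (1 / 2) (1 / 2) ξ τ * thetaChar (1 / 2) (1 / 2) (-ξ - N * ζ) τ
          / thetaChar (1 / 2) (1 / 2) ζ τ ^ 2 * (if i ≡ j [ZMOD N] then 1 else 0) := by
  have hζ (a : ZMod N) : thetaZMod N τ a ζ ≠ 0 := by
    obtain ⟨n, rfl⟩ := ZMod.intCast_surjective a
    rw [thetaZMod_intCast]
    simpa only [Int.cast_neg, neg_neg] using hden1 (-n)
  rw [prod_Icc_thetaChar] at hden2
  set Φ := circulantSymbol N ξ ζ τ
  set Ψ := circulantSymbol N (-ξ - N * ζ) ζ τ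
  calc ∑ k ∈ Finset.range N, Smat N ξ ζ τ (i - k) 0 * Smat N (-ξ - N * ζ) ζ τ (j - k) 0
      = ∑ k : ZMod N, Φ (k - i) * Ψ (k - j) := by
        rw [← sum_range_natCast_zmod fun k : ZMod N ↦ Φ (k - i) * Ψ (k - j)]
        simp only [Smat_zero_right, Int.cast_sub, Int.cast_natCast, neg_sub, Φ, Ψ]
    _ = ∑ k, Φ k * Ψ (k + (i - j)) :=
        Fintype.sum_equiv (Equiv.subRight (i : ZMod N)) _ _ fun k ↦ by simp
    _ = _ := by
        rw [sum_mul_comp_add_eq_ite (dft_circulantSymbol_neg_mul_dft hτ hζ hden2 hden3 ξ)]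
        simp only [sub_eq_zero, ZMod.intCast_eq_intCast_iff, mul_ite, mul_one, mul_zero]

/-- The crossing identity for the elliptic R-matrix entries:
`∑_{k∈ℤ_N} S^{i−k,0}(ξ,ζ,τ) S^{j−k,0}(−ξ−Nζ,ζ,τ)
  = (ϑ[1/2,1/2](ξ,τ) ϑ[1/2,1/2](−ξ−Nζ,τ)/ϑ[1/2,1/2](ζ,τ)²) δ_{ij}`. -/
theorem stmt8 (N : ℕ) (hN : 1 ≤ N) (tau : ℂ) (htau : 0 < tau.im) (xi zeta : ℂ)
    (hden1 : ∀ a : ℤ, thetaChar (-((a : ℤ) : ℝ) / N + 1 / 2) (1 / 2) zeta ((N : ℂ) * tau) ≠ 0)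
    (hden2 : ∏ k ∈ Finset.Icc 1 (N - 1),
      thetaChar ((k : ℝ) / N + 1 / 2) (1 / 2) 0 ((N : ℂ) * tau) ≠ 0)
    (hden3 : thetaChar (1 / 2) (1 / 2) zeta tau ≠ 0)
    (i j : ℕ) (hi : i < N) (hj : j < N) :
    ∑ k ∈ Finset.range N,
        Smat N xi zeta tau ((i : ℤ) - (k : ℤ)) 0
          * Smat N (-xi - (N : ℂ) * zeta) zeta tau ((j : ℤ) - (k : ℤ)) 0
      = thetaChar (1 / 2) (1 / 2) xi tau
          * thetaChar (1 / 2) (1 / 2) (-xi - (N : ℂ) * zeta) tau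
          / thetaChar (1 / 2) (1 / 2) zeta tau ^ 2
        * (if i = j then 1 else 0) := by
  have : NeZero N := ⟨Nat.one_le_iff_ne_zero.mp hN⟩
  simpa only [Int.natCast_modEq_iff, Nat.ModEq, Nat.mod_eq_of_lt hi, Nat.mod_eq_of_lt hj]
    using stmt8_general N tau htau xi zeta hden1 hden2 hden3 i j
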